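/- Let n ≥ 2, R > 0, f ∈ C¹(ℝ), and let u ∈ W^{3,1}_loc(B_{2R}) be a stable solution of div(∇u/√(1+|∇u|²)) = −f(u) in B_{2R} ⊂ ℝⁿ. Set z := |∇u|². Then for every η ∈ C_c^∞(B_{2R}): ∫_{B_{2R}} z((n−1)z + (n−2)) / (1+z)^{3/2} · η² dx ≤ ∫_{B_{2R}} [ (x·∇u)²|∇η|² / √(1+z) + 2(2+z)(x·∇u)(∇u·∇η)η / (1+z)^{3/2} − 2zη(x·∇η) / √(1+z) − (x·∇u)²(∇u·∇η)² / (1+z)^{3/2} ] dx. -/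

import Mathlib

open MeasureTheory Metric Real Filter Asymptotics Bornology
open scoped RealInnerProductSpace Topology

noncomputable section

/-- Euclidean space `ℝⁿ`. -/
abbrev Euc (n : ℕ) := EuclideanSpace ℝ (Fin n)

/-- `φ` is an admissible test function on `Ω`: smooth with compact support contained in `Ω`
(i.e. `φ ∈ C_c^∞(Ω)`). -/
def IsTestFun {n : ℕ} (Ω : Set (Euc n)) (φ : Euc n → ℝ) : Prop :=
  ContDiff ℝ (⊤ : ℕ∞) φ ∧ HasCompactSupport φ ∧ tsupport φ ⊆ Ω

/-- `u` is a weak solution of the mean curvature equation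
`div(∇u/√(1+|∇u|²)) = -f(u)` in `Ω`:  `u ∈ W^{1,1}_loc(Ω)`, `f(u) ∈ L¹_loc(Ω)` and
`∫_Ω ∇u·∇φ/√(1+|∇u|²) = ∫_Ω f(u) φ` for every `φ ∈ C_c^∞(Ω)`. -/
def IsWeakSolution {n : ℕ} (Ω : Set (Euc n)) (f : ℝ → ℝ) (u : Euc n → ℝ) : Prop :=
  LocallyIntegrableOn u Ω ∧
  LocallyIntegrableOn (fun x => ‖gradient u x‖) Ω ∧
  LocallyIntegrableOn (fun x => f (u x)) Ω ∧
  ∀ φ : Euc n → ℝ, IsTestFun Ω φ →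
    ∫ x in Ω, ⟪gradient u x, gradient φ x⟫ / Real.sqrt (1 + ‖gradient u x‖ ^ 2)
      = ∫ x in Ω, f (u x) * φ x

/-- `u` is a stable solution of `div(∇u/√(1+|∇u|²)) = -f(u)` in `Ω`: it is a weak solution,
`f'(u) ∈ L¹_loc(Ω)` and the second variation of the energy at `u` is nonnegative:
`∫_Ω f'(u) ξ² ≤ ∫_Ω (|∇ξ|²/√(1+|∇u|²) - (∇u·∇ξ)²/(1+|∇u|²)^{3/2})` for all `ξ ∈ C_c^∞(Ω)`. -/
def IsStableSolution {n : ℕ} (Ω : Set (Euc n)) (f : ℝ → ℝ) (u : Euc n → ℝ) : Prop :=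
  IsWeakSolution Ω f u ∧
  LocallyIntegrableOn (fun x => deriv f (u x)) Ω ∧
  ∀ ξ : Euc n → ℝ, IsTestFun Ω ξ →
    ∫ x in Ω, deriv f (u x) * ξ x ^ 2 ≤
      ∫ x in Ω, (‖gradient ξ x‖ ^ 2 / Real.sqrt (1 + ‖gradient u x‖ ^ 2)
        - ⟪gradient u x, gradient ξ x⟫ ^ 2 / (1 + ‖gradient u x‖ ^ 2) ^ ((3:ℝ)/2))

/-- A vector field `g` belongs to the Morrey space `M^p(Ω)`: there is `K > 0` with
`∫_{B_ρ(x₀) ∩ Ω} |g| ≤ K ρ^{n(1-1/p)}` for all `x₀ ∈ Ω` and `0 < ρ ≤ diam Ω`. -/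
def MemMorrey {n : ℕ} (Ω : Set (Euc n)) (p : ℝ) (g : Euc n → Euc n) : Prop :=
  ∃ K > (0:ℝ), ∀ x₀ ∈ Ω, ∀ ρ : ℝ, 0 < ρ → ρ ≤ Metric.diam Ω →
    ∫ x in Metric.ball x₀ ρ ∩ Ω, ‖g x‖ ≤ K * ρ ^ ((n : ℝ) * (1 - 1 / p))

/-- `z = |∇u|²`. -/
def zsq {n : ℕ} (u : Euc n → ℝ) (x : Euc n) : ℝ := ‖gradient u x‖ ^ 2

/-- `x·∇u`. -/
def xdu {n : ℕ} (u : Euc n → ℝ) (x : Euc n) : ℝ := ⟪x, gradient u x⟫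

/-! Stability is tested with `ξ = (x·∇u) η`. The radial derivative `v = x·∇u` is the infinitesimal
change of `u` under dilations, so differentiating the equation radially and integrating by parts
shows that `v` solves the linearized equation up to lower-order terms. For the symmetric operator
`A = D²L(∇u)`, the Jacobi identity `⟪A ∇(vη), ∇(vη)⟫ = ⟪A ∇v, ∇(vη²)⟫ + v² ⟪A ∇η, ∇η⟫` then turns
the second variation at `ξ` into an integral whose only second derivatives of `u` form the radial
derivative of `⟪∇L(∇u), ∇u⟫`; a last integration by parts removes them. None of this depends on the
form of the energy density `L(∇u)`, and the theorem is the case `L(p) = √(1 + |p|²)`. -/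

open scoped Gradient Convolution ContDiff

section Gradient

variable {E : Type*} [NormedAddCommGroup E] [InnerProductSpace ℝ E] [CompleteSpace E]
  {g a b : E → ℝ} {Ω : Set E} {x : E}

/-- The Hessian of `g` at `x`, as an operator on `E`. -/
def hessian (g : E → ℝ) (x : E) : E →L[ℝ] E := fderiv ℝ (∇ g) x

theorem contDiffAt_gradient {m k : WithTop ℕ∞} (hg : ContDiffAt ℝ k g x) (hmk : m + 1 ≤ k) :
    ContDiffAt ℝ m (∇ g) x :=
  (InnerProductSpace.toDual ℝ E).symm.contDiff.contDiffAt.comp x (hg.fderiv_right hmk)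

theorem contDiffOn_gradient {m k : WithTop ℕ∞} (hΩ : IsOpen Ω) (hg : ContDiffOn ℝ k g Ω)
    (hmk : m + 1 ≤ k) : ContDiffOn ℝ m (∇ g) Ω := fun _ hx =>
  (contDiffAt_gradient (hg.contDiffAt (hΩ.mem_nhds hx)) hmk).contDiffWithinAt

theorem continuousOn_hessian (hΩ : IsOpen Ω) (hg : ContDiffOn ℝ 2 g Ω) :
    ContinuousOn (hessian g) Ω :=
  (contDiffOn_gradient hΩ hg le_rfl).continuousOn_fderiv_of_isOpen hΩ le_rfl

theorem hasFDerivAt_gradient (hg : ContDiffAt ℝ 2 g x) : HasFDerivAt (∇ g) (hessian g x) x :=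
  ((contDiffAt_gradient hg le_rfl).differentiableAt one_ne_zero).hasFDerivAt

theorem inner_hessian_comm (hg : ContDiffAt ℝ 2 g x) (v w : E) :
    ⟪hessian g x v, w⟫ = ⟪v, hessian g x w⟫ := by
  have inner_hessian (v w : E) : ⟪hessian g x v, w⟫ = fderiv ℝ (fderiv ℝ g) x v w := by
    have hd : HasFDerivAt (fderiv ℝ g) (fderiv ℝ (fderiv ℝ g) x) x :=
      ((hg.fderiv_right le_rfl).differentiableAt one_ne_zero).hasFDerivAt
    have hgrad : HasFDerivAt (∇ g) _ x :=
      (InnerProductSpace.toDual ℝ E).symm.toContinuousLinearEquiv.hasFDerivAt.comp x hd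
    rw [hessian, hgrad.fderiv]
    exact InnerProductSpace.toDual_symm_apply
  rw [inner_hessian, real_inner_comm, inner_hessian]
  exact hg.isSymmSndFDerivAt (by simp) v w

theorem gradient_eq_of_forall_fderiv_apply {p : E} (h : ∀ y, fderiv ℝ g x y = ⟪p, y⟫) :
    ∇ g x = p :=
  ext_inner_right ℝ fun y => by rw [inner_gradient_left, h]

theorem gradient_fun_mul (ha : DifferentiableAt ℝ a x) (hb : DifferentiableAt ℝ b x) :
    ∇ (fun y => a y * b y) x = a x • ∇ b x + b x • ∇ a x :=
  gradient_eq_of_forall_fderiv_apply fun y => by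
    simp [fderiv_fun_mul ha hb, inner_add_left, inner_smul_left]

theorem gradient_inner_self_gradient (hg : ContDiffAt ℝ 2 g x) :
    ∇ (fun y => ⟪y, ∇ g y⟫) x = ∇ g x + hessian g x x :=
  gradient_eq_of_forall_fderiv_apply fun y => by
    rw [fderiv_inner_apply ℝ differentiableAt_fun_id (hasFDerivAt_gradient hg).differentiableAt,
      (hasFDerivAt_gradient hg).fderiv, ← inner_hessian_comm hg, fderiv_fun_id,
      ContinuousLinearMap.id_apply, inner_add_left, add_comm,
      real_inner_comm (∇ g x) y]

theorem gradient_eq_zero_of_notMem_tsupport (hx : x ∉ tsupport g) : ∇ g x = 0 := by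
  have : fderiv ℝ g x = 0 := by_contra fun h => hx (support_fderiv_subset ℝ h)
  rw [gradient, this, map_zero]

end Gradient

section IntegrationByParts

variable {E : Type*} [NormedAddCommGroup E] [NormedSpace ℝ E] [MeasurableSpace E]
  [BorelSpace E] {μ : Measure E} {G : Type*} [NormedAddCommGroup G] [NormedSpace ℝ G] {g : E → G}

theorem integrable_clm_smul_fderiv_apply (hg : ContDiff ℝ 1 g) (hc : HasCompactSupport g)
    [IsFiniteMeasureOnCompacts μ] (c : E →L[ℝ] ℝ) (v : E) :
    Integrable (fun x => c x • fderiv ℝ g x v) μ :=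
  (c.continuous.smul ((hg.continuous_fderiv one_ne_zero).clm_apply
    continuous_const)).integrable_of_hasCompactSupport (hc.fderiv_apply ℝ v).smul_left

variable [FiniteDimensional ℝ E] [μ.IsAddHaarMeasure]

theorem integral_clm_smul_fderiv_apply (hg : ContDiff ℝ 1 g) (hc : HasCompactSupport g)
    (c : E →L[ℝ] ℝ) (v : E) :
    ∫ x, c x • fderiv ℝ g x v ∂μ = -(c v • ∫ x, g x ∂μ) := by
  have hgi : Integrable g μ := hg.continuous.integrable_of_hasCompactSupport hc
  rw [integral_smul_fderiv_eq_neg_fderiv_smul_of_integrable (by simpa using hgi.fun_smul (c v))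
    (integrable_clm_smul_fderiv_apply hg hc c v)
    ((c.continuous.smul hg.continuous).integrable_of_hasCompactSupport hc.smul_left)
    (fun x _ => c.differentiableAt) fun x _ => hg.differentiable one_ne_zero x]
  simp [integral_smul]

theorem integral_fderiv_apply_self (hg : ContDiff ℝ 1 g) (hc : HasCompactSupport g) :
    ∫ x, fderiv ℝ g x x ∂μ = -((Module.finrank ℝ E : ℝ) • ∫ x, g x ∂μ) := by
  let b := Module.finBasis ℝ E
  let c (i) : E →L[ℝ] ℝ := (b.coord i).toContinuousLinearMap
  have hexpand (x : E) : fderiv ℝ g x x = ∑ i, c i x • fderiv ℝ g x (b i) := by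
    conv_lhs => arg 2; rw [← b.sum_repr x]
    simp only [map_sum, map_smul]
    rfl
  have hdual (i) : c i (b i) = 1 := by simp [c]
  simp_rw [hexpand]
  rw [integral_finsetSum _ fun i _ => integrable_clm_smul_fderiv_apply hg hc (c i) (b i)]
  simp [integral_clm_smul_fderiv_apply hg hc, hdual, Nat.cast_smul_eq_nsmul]

end IntegrationByParts

section Mollification

open ContinuousLinearMap (lsmul)

variable {E : Type*} [NormedAddCommGroup E] [NormedSpace ℝ E] [FiniteDimensional ℝ E]
  {G : Type*} [NormedAddCommGroup G] [NormedSpace ℝ G] {φ : E → G}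

section

variable [MeasurableSpace E] [BorelSpace E] {μ : Measure E} [μ.IsAddHaarMeasure]

theorem tsupport_normed_convolution_subset (b : ContDiffBump (0 : E)) :
    tsupport (b.normed μ ⋆[lsmul ℝ ℝ, μ] φ) ⊆ cthickening b.rOut (tsupport φ) := by
  refine closure_minimal ((support_convolution_subset _).trans ?_) isClosed_cthickening
  rintro _ ⟨y, hy, z, hz, rfl⟩
  rw [b.support_normed_eq, mem_ball_zero_iff] at hy
  exact mem_cthickening_of_dist_le _ z _ _ (subset_tsupport _ hz) (by simpa using hy.le)

theorem fderiv_normed_convolution (b : ContDiffBump (0 : E)) (hφ : ContDiff ℝ 1 φ)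
    (hc : HasCompactSupport φ) :
    fderiv ℝ (b.normed μ ⋆[lsmul ℝ ℝ, μ] φ) = b.normed μ ⋆[lsmul ℝ ℝ, μ] fderiv ℝ φ := by
  ext1 x
  exact (hc.hasFDerivAt_convolution_right (lsmul ℝ ℝ) b.continuous_normed.locallyIntegrable hφ
    x).fderiv

variable [CompleteSpace G]

theorem tendstoUniformly_normed_convolution {ι : Type*} {l : Filter ι}
    {b : ι → ContDiffBump (0 : E)} (hb : Tendsto (fun i => (b i).rOut) l (𝓝 0))
    (hφ : UniformContinuous φ) :
    TendstoUniformly (fun i => (b i).normed μ ⋆[lsmul ℝ ℝ, μ] φ) φ l := by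
  rw [Metric.tendstoUniformly_iff]
  intro ε hε
  obtain ⟨δ, hδ, hφδ⟩ := Metric.uniformContinuous_iff.1 hφ (ε / 2) (half_pos hε)
  filter_upwards [hb.eventually_lt_const hδ] with i hi x
  rw [dist_comm]
  refine ((b i).dist_normed_convolution_le hφ.continuous.aestronglyMeasurable
    fun y hy => ?_).trans_lt (half_lt_self hε)
  exact (hφδ ((mem_ball.1 hy).trans hi)).le

end

theorem exists_contDiff_tendstoUniformly_fderiv [CompleteSpace G] {Ω : Set E} (hΩ : IsOpen Ω)
    (hφ : ContDiff ℝ 1 φ) (hc : HasCompactSupport φ) (hs : tsupport φ ⊆ Ω) :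
    ∃ (K : Set E) (g : ℕ → E → G), IsCompact K ∧ K ⊆ Ω ∧
      (∀ k, ContDiff ℝ ∞ (g k) ∧ tsupport (g k) ⊆ K) ∧ TendstoUniformly g φ atTop ∧
      TendstoUniformly (fun k => fderiv ℝ (g k)) (fderiv ℝ φ) atTop := by
  borelize E
  obtain ⟨δ, hδ, hδΩ⟩ := hc.isCompact.exists_cthickening_subset_open hΩ hs
  obtain ⟨r, -, hr, hr_lim⟩ := exists_seq_strictAnti_tendsto' hδ
  let b (k : ℕ) : ContDiffBump (0 : E) :=
    ⟨r k / 2, r k, half_pos (hr k).1, half_lt_self (hr k).1⟩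
  refine ⟨cthickening δ (tsupport φ), fun k => (b k).normed .addHaar ⋆[lsmul ℝ ℝ, .addHaar] φ,
    hc.isCompact.cthickening, hδΩ, fun k => ⟨?_, ?_⟩, ?_, ?_⟩
  · exact (b k).hasCompactSupport_normed.contDiff_convolution_left _ (b k).contDiff_normed
      hφ.continuous.locallyIntegrable
  · exact (tsupport_normed_convolution_subset (b k)).trans
      (cthickening_mono (hr k).2.le _)
  · exact tendstoUniformly_normed_convolution hr_lim
      (hc.uniformContinuous_of_continuous hφ.continuous)
  · simp_rw [fderiv_normed_convolution _ hφ hc]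
    exact tendstoUniformly_normed_convolution hr_lim
      ((hc.fderiv ℝ).uniformContinuous_of_continuous (hφ.continuous_fderiv one_ne_zero))

end Mollification

section UniformLimits

variable {X V G : Type*} [TopologicalSpace X] [MeasurableSpace X] [OpensMeasurableSpace X]
  [T2Space X] {μ : Measure X} [IsFiniteMeasureOnCompacts μ] [MetricSpace V] [ProperSpace V]
  [NormedAddCommGroup G] [NormedSpace ℝ G] [SecondCountableTopologyEither X G]

theorem tendsto_setIntegral_comp_of_tendstoUniformly {F : X × V → G} {K Ω : Set X}
    (hΩ : MeasurableSet Ω) (hF : ContinuousOn F (Ω ×ˢ Set.univ)) (hK : IsCompact K) (hKΩ : K ⊆ Ω)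
    {Φ : ℕ → X → V} {Φ₀ : X → V} (hΦ : ∀ k, Continuous (Φ k))
    (hlim : TendstoUniformly Φ Φ₀ atTop) (hzero : ∀ k, ∀ x ∉ K, F (x, Φ k x) = 0) :
    Tendsto (fun k => ∫ x in Ω, F (x, Φ k x) ∂μ) atTop (𝓝 (∫ x in Ω, F (x, Φ₀ x) ∂μ)) := by
  have hΦ₀ : Continuous Φ₀ := hlim.continuous (.of_forall hΦ)
  obtain ⟨C, hC⟩ := (hK.prod (hK.image hΦ₀).cthickening).exists_bound_of_continuousOn
    (hF.mono (Set.prod_mono hKΩ (Set.subset_univ (cthickening 1 (Φ₀ '' K)))))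
  refine tendsto_integral_filter_of_dominated_convergence (K.indicator fun _ => C) ?_ ?_ ?_ ?_
  · refine .of_forall fun k => ContinuousOn.aestronglyMeasurable ?_ hΩ
    exact hF.comp (continuous_id.prodMk (hΦ k)).continuousOn fun x hx => ⟨hx, Set.mem_univ _⟩
  · filter_upwards [Metric.tendstoUniformly_iff.1 hlim 1 one_pos] with k hk
    refine .of_forall fun x => ?_
    by_cases hx : x ∈ K
    · rw [Set.indicator_of_mem hx]
      refine hC _ ⟨hx, mem_cthickening_of_dist_le _ (Φ₀ x) _ _ ⟨x, hx, rfl⟩ ?_⟩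
      exact dist_comm (Φ₀ x) _ ▸ (hk x).le
    · simp [hx, hzero k x hx]
  · exact ((integrable_indicator_iff hK.measurableSet).2
      (integrableOn_const hK.measure_lt_top.ne)).integrableOn
  · refine (ae_restrict_iff' hΩ).2 (.of_forall fun x hx => ?_)
    exact (hF (x, Φ₀ x) ⟨hx, trivial⟩).tendsto.comp (tendsto_nhdsWithin_iff.2
      ⟨tendsto_const_nhds.prodMk_nhds (hlim.tendsto_at x), .of_forall fun k => ⟨hx, trivial⟩⟩)

end UniformLimits

section CompactSupport

variable {E : Type*} [NormedAddCommGroup E] [NormedSpace ℝ E] {Ω : Set E}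
  {G : Type*} [NormedAddCommGroup G] [NormedSpace ℝ G] {g : E → G}

theorem contDiff_of_contDiffOn_of_tsupport_subset {k : WithTop ℕ∞} (hΩ : IsOpen Ω)
    (hg : ContDiffOn ℝ k g Ω) (hs : tsupport g ⊆ Ω) : ContDiff ℝ k g :=
  (contMDiff_of_tsupport fun _ hx =>
    (hg.contDiffAt (hΩ.mem_nhds (hs hx))).contMDiffAt).contDiff

variable [MeasurableSpace E] [BorelSpace E] {μ : Measure E}

theorem setIntegral_fderiv_apply_self [FiniteDimensional ℝ E] [μ.IsAddHaarMeasure]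
    (hΩ : IsOpen Ω) (hg : ContDiffOn ℝ 1 g Ω) (hc : HasCompactSupport g) (hs : tsupport g ⊆ Ω) :
    ∫ x in Ω, fderiv ℝ g x x ∂μ = -((Module.finrank ℝ E : ℝ) • ∫ x in Ω, g x ∂μ) := by
  rw [setIntegral_eq_integral_of_forall_compl_eq_zero fun x hx => ?_,
    setIntegral_eq_integral_of_forall_compl_eq_zero fun x hx =>
      image_eq_zero_of_notMem_tsupport fun h => hx (hs h),
    integral_fderiv_apply_self (contDiff_of_contDiffOn_of_tsupport_subset hΩ hg hs) hc]
  rw [fderiv_of_notMem_tsupport ℝ fun h => hx (hs h), zero_apply]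

end CompactSupport

theorem integrableOn_of_continuousOn_of_eq_zero {X G : Type*} [TopologicalSpace X]
    [MeasurableSpace X] [OpensMeasurableSpace X] [T2Space X] [NormedAddCommGroup G]
    {μ : Measure X} [IsFiniteMeasureOnCompacts μ] {Ω K : Set X} {F : X → G}
    (hF : ContinuousOn F Ω) (hK : IsCompact K) (hKΩ : K ⊆ Ω) (hzero : ∀ x ∉ K, F x = 0) :
    IntegrableOn F Ω μ :=
  ((integrableOn_iff_integrable_of_support_subset fun x hx => by_contra fun h =>
    hx (hzero x h)).1 ((hF.mono hKΩ).integrableOn_compact hK)).integrableOn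

section TestFunctions

variable {n : ℕ} {Ω : Set (Euc n)} {φ η : Euc n → ℝ}

/-- `φ ∈ C_c¹(Ω)`: the class of functions by which stability is tested with `(x·∇u) η`, which is
only as smooth as `∇u`. -/
def IsC1TestFun (Ω : Set (Euc n)) (φ : Euc n → ℝ) : Prop :=
  ContDiff ℝ 1 φ ∧ HasCompactSupport φ ∧ tsupport φ ⊆ Ω

theorem IsTestFun.isC1TestFun (hφ : IsTestFun Ω φ) : IsC1TestFun Ω φ :=
  ⟨hφ.1.of_le (mod_cast le_top), hφ.2⟩

theorem isC1TestFun_of_eq_zero {g : Euc n → ℝ} (hΩ : IsOpen Ω) (hφ : IsC1TestFun Ω φ)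
    (hg : ContDiffOn ℝ 1 g Ω) (hzero : ∀ x ∉ tsupport φ, g x = 0) : IsC1TestFun Ω g := by
  have hs : tsupport g ⊆ tsupport φ :=
    closure_minimal (fun x hx => by_contra fun h => hx (hzero x h)) (isClosed_tsupport φ)
  exact ⟨contDiff_of_contDiffOn_of_tsupport_subset hΩ hg (hs.trans hφ.2.2),
    hφ.2.1.of_isClosed_subset (isClosed_tsupport g) hs, hs.trans hφ.2.2⟩

theorem xdu_eq_fderiv (φ : Euc n → ℝ) : xdu φ = fun x => fderiv ℝ φ x x := by
  ext x
  simp [xdu]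

theorem isTestFun_xdu (hφ : IsTestFun Ω φ) : IsTestFun Ω (xdu φ) := by
  have hs : tsupport (xdu φ) ⊆ tsupport φ :=
    closure_minimal (fun x hx => by_contra fun h => hx (by
      simp [xdu, gradient_eq_zero_of_notMem_tsupport h])) (isClosed_tsupport φ)
  exact ⟨xdu_eq_fderiv φ ▸ (hφ.1.fderiv_right (m := ∞) le_rfl).clm_apply contDiff_id,
    hφ.2.1.of_isClosed_subset (isClosed_tsupport _) hs, hs.trans hφ.2.2⟩

theorem setIntegral_nonneg_of_forall_isTestFun (hΩ : IsOpen Ω)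
    {F : Euc n × (ℝ × Euc n) → ℝ} (hF : ContinuousOn F (Ω ×ˢ Set.univ)) (hF₀ : ∀ x, F (x, 0) = 0)
    (h : ∀ φ, IsTestFun Ω φ → 0 ≤ ∫ x in Ω, F (x, φ x, ∇ φ x)) (hφ : IsC1TestFun Ω φ) :
    0 ≤ ∫ x in Ω, F (x, φ x, ∇ φ x) := by
  obtain ⟨K, g, hK, hKΩ, hg, hg_lim, hg'_lim⟩ :=
    exists_contDiff_tendstoUniformly_fderiv hΩ hφ.1 hφ.2.1 hφ.2.2
  have hgrad_lim : TendstoUniformly (fun k => ∇ (g k)) (∇ φ) atTop :=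
    (InnerProductSpace.toDual ℝ (Euc n)).symm.isometry.uniformContinuous.comp_tendstoUniformly
      hg'_lim
  have hgrad_cont (k : ℕ) : Continuous (∇ (g k)) := continuous_iff_continuousAt.2 fun x =>
    (contDiffAt_gradient (m := 0) (hg k).1.contDiffAt (by simp)).continuousAt
  have hzero (k : ℕ) (x : Euc n) (hx : x ∉ K) : F (x, g k x, ∇ (g k) x) = 0 := by
    have hxs : x ∉ tsupport (g k) := fun hxs => hx ((hg k).2 hxs)
    rw [image_eq_zero_of_notMem_tsupport hxs, gradient_eq_zero_of_notMem_tsupport hxs]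
    exact hF₀ x
  have hprod_lim : TendstoUniformly (fun k x => (g k x, ∇ (g k) x)) (fun x => (φ x, ∇ φ x)) atTop :=
    fun V hV => tendsto_diag.eventually (hg_lim.prodMk hgrad_lim V hV)
  have hlim := tendsto_setIntegral_comp_of_tendstoUniformly (μ := volume) hΩ.measurableSet hF hK
    hKΩ (fun k => (hg k).1.continuous.prodMk (hgrad_cont k)) hprod_lim hzero
  exact ge_of_tendsto' hlim fun k => h _ ⟨(hg k).1, HasCompactSupport.of_support_subset_isCompact hK
    (subset_tsupport _ |>.trans (hg k).2), (hg k).2.trans hKΩ⟩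

theorem setIntegral_eq_zero_of_forall_isTestFun (hΩ : IsOpen Ω)
    {F : Euc n × (ℝ × Euc n) → ℝ} (hF : ContinuousOn F (Ω ×ˢ Set.univ)) (hF₀ : ∀ x, F (x, 0) = 0)
    (h : ∀ φ, IsTestFun Ω φ → ∫ x in Ω, F (x, φ x, ∇ φ x) = 0) (hφ : IsC1TestFun Ω φ) :
    ∫ x in Ω, F (x, φ x, ∇ φ x) = 0 := by
  refine le_antisymm ?_ (setIntegral_nonneg_of_forall_isTestFun hΩ hF hF₀
    (fun ψ hψ => (h ψ hψ).ge) hφ)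
  have hneg := setIntegral_nonneg_of_forall_isTestFun hΩ hF.neg (fun x => by simp [hF₀])
    (fun ψ hψ => by simp [integral_neg, h ψ hψ]) hφ
  simpa [integral_neg] using hneg

section Coefficients

variable {A : Euc n → Euc n →L[ℝ] Euc n} {B : Euc n → Euc n} {c : Euc n → ℝ}

theorem setIntegral_linearForm_eq_zero (hΩ : IsOpen Ω) (hB : ContinuousOn B Ω)
    (hc : ContinuousOn c Ω)
    (h : ∀ φ, IsTestFun Ω φ → ∫ x in Ω, (⟪B x, ∇ φ x⟫ - c x * φ x) = 0)
    (hφ : IsC1TestFun Ω φ) : ∫ x in Ω, (⟪B x, ∇ φ x⟫ - c x * φ x) = 0 := by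
  have hfst : Set.MapsTo Prod.fst (Ω ×ˢ (Set.univ : Set (ℝ × Euc n))) Ω := fun _ hq => hq.1
  have hB' := hB.comp continuousOn_fst hfst
  have hc' := hc.comp continuousOn_fst hfst
  refine setIntegral_eq_zero_of_forall_isTestFun (F := fun q => ⟪B q.1, q.2.2⟫ - c q.1 * q.2.1)
    hΩ ?_ (by simp) h hφ
  exact (hB'.inner (by fun_prop)).sub (hc'.mul (by fun_prop))

theorem setIntegral_quadraticForm_nonneg (hΩ : IsOpen Ω) (hA : ContinuousOn A Ω)
    (hc : ContinuousOn c Ω)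
    (h : ∀ φ, IsTestFun Ω φ → 0 ≤ ∫ x in Ω, (⟪A x (∇ φ x), ∇ φ x⟫ - c x * φ x ^ 2))
    (hφ : IsC1TestFun Ω φ) : 0 ≤ ∫ x in Ω, (⟪A x (∇ φ x), ∇ φ x⟫ - c x * φ x ^ 2) := by
  have hfst : Set.MapsTo Prod.fst (Ω ×ˢ (Set.univ : Set (ℝ × Euc n))) Ω := fun _ hq => hq.1
  have hA' := hA.comp continuousOn_fst hfst
  have hc' := hc.comp continuousOn_fst hfst
  refine setIntegral_nonneg_of_forall_isTestFun
    (F := fun q => ⟪A q.1 q.2.2, q.2.2⟫ - c q.1 * q.2.1 ^ 2) hΩ ?_ (by simp) h hφ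
  exact ((hA'.clm_apply (by fun_prop)).inner (by fun_prop)).sub (hc'.mul (by fun_prop))

theorem continuous_gradient (hφ : ContDiff ℝ 1 φ) : Continuous (∇ φ) :=
  continuousOn_univ.1 (contDiffOn_gradient (m := 0) isOpen_univ hφ.contDiffOn le_rfl).continuousOn

theorem integrableOn_linearForm (hB : ContinuousOn B Ω) (hc : ContinuousOn c Ω)
    (hφ : IsC1TestFun Ω φ) : IntegrableOn (fun x => ⟪B x, ∇ φ x⟫ - c x * φ x) Ω :=
  integrableOn_of_continuousOn_of_eq_zero
    ((hB.inner (continuous_gradient hφ.1).continuousOn).sub (hc.mul hφ.1.continuous.continuousOn))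
    hφ.2.1 hφ.2.2 fun x hx => by
      rw [gradient_eq_zero_of_notMem_tsupport hx, image_eq_zero_of_notMem_tsupport hx]; simp

theorem integrableOn_quadraticForm (hA : ContinuousOn A Ω) (hc : ContinuousOn c Ω)
    (hφ : IsC1TestFun Ω φ) : IntegrableOn (fun x => ⟪A x (∇ φ x), ∇ φ x⟫ - c x * φ x ^ 2) Ω :=
  have hgrad := (continuous_gradient hφ.1).continuousOn
  integrableOn_of_continuousOn_of_eq_zero
    (((hA.clm_apply hgrad).inner hgrad).sub (hc.mul (hφ.1.continuous.pow 2).continuousOn))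
    hφ.2.1 hφ.2.2 fun x hx => by
      rw [gradient_eq_zero_of_notMem_tsupport hx, image_eq_zero_of_notMem_tsupport hx]; simp

end Coefficients

theorem integrableOn_xdu_add_mul (hφ : IsC1TestFun Ω φ) (a : ℝ) :
    IntegrableOn (fun x => xdu φ x + a * φ x) Ω := by
  simpa [xdu_eq_fderiv] using
    integrableOn_linearForm continuousOn_id (continuousOn_const (c := -a)) hφ

theorem setIntegral_xdu_add_mul_eq_zero (hΩ : IsOpen Ω) (hφ : IsC1TestFun Ω φ) :
    ∫ x in Ω, (xdu φ x + n * φ x) = 0 := by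
  have hφ_int : IntegrableOn (fun x => n * φ x) Ω :=
    ((hφ.1.continuous.integrable_of_hasCompactSupport hφ.2.1).const_mul _).integrableOn
  have hxdu_int : IntegrableOn (xdu φ) Ω := by simpa using integrableOn_xdu_add_mul hφ 0
  rw [integral_add hxdu_int hφ_int, integral_const_mul, xdu_eq_fderiv,
    setIntegral_fderiv_apply_self hΩ hφ.1.contDiffOn hφ.2.1 hφ.2.2]
  simp

end TestFunctions

section RadialLinearization

variable {n : ℕ} {Ω : Set (Euc n)} {L : Euc n → ℝ} {f : ℝ → ℝ} {u φ η : Euc n → ℝ} {x : Euc n}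

/-- The density of the first variation of the energy `∫ L(∇u) - F(u)`, `F' = f`, at `u` in the
direction `φ`. -/
def firstVariation (L : Euc n → ℝ) (f : ℝ → ℝ) (u φ : Euc n → ℝ) (x : Euc n) : ℝ :=
  ⟪∇ L (∇ u x), ∇ φ x⟫ - f (u x) * φ x

/-- The density of the second variation of the energy `∫ L(∇u) - F(u)`, `F' = f`, at `u` in the
direction `ξ`. -/
def secondVariation (L : Euc n → ℝ) (f : ℝ → ℝ) (u ξ : Euc n → ℝ) (x : Euc n) : ℝ :=
  ⟪hessian L (∇ u x) (∇ ξ x), ∇ ξ x⟫ - deriv f (u x) * ξ x ^ 2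

/-- `u` is a critical point in `Ω` of the energy `∫ L(∇u) - F(u)`, `F' = f`; that is, a weak
solution of `div (∇L(∇u)) = -f(u)`. -/
def IsCriticalPoint (Ω : Set (Euc n)) (L : Euc n → ℝ) (f : ℝ → ℝ) (u : Euc n → ℝ) : Prop :=
  ∀ φ, IsTestFun Ω φ → ∫ x in Ω, firstVariation L f u φ x = 0

/-- The second variation at `u` of the energy `∫ L(∇u) - F(u)`, `F' = f`, is nonnegative on
`C_c^∞(Ω)`. -/
def HasNonnegSecondVariation (Ω : Set (Euc n)) (L : Euc n → ℝ) (f : ℝ → ℝ) (u : Euc n → ℝ) :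
    Prop :=
  ∀ ξ, IsTestFun Ω ξ → 0 ≤ ∫ x in Ω, secondVariation L f u ξ x

/-- The density of the weak form of the equation satisfied by the radial derivative `x·∇u`:
the linearization at `u` of the Euler–Lagrange equation, applied to `x·∇u`, up to the terms that
come from the dilation of space. Since `∇(x·∇u) = ∇u + D²u x`, the vector `D²u x` stands for
`∇(x·∇u) - ∇u`. -/
def radialLinearization (L : Euc n → ℝ) (f : ℝ → ℝ) (u φ : Euc n → ℝ) (x : Euc n) : ℝ :=
  ⟪hessian L (∇ u x) (hessian u x x) - ∇ L (∇ u x), ∇ φ x⟫ - deriv f (u x) * xdu u x * φ x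

theorem fderiv_inner_gradient_comp_gradient (hL : ContDiffAt ℝ 2 L (∇ u x))
    (hu : ContDiffAt ℝ 2 u x) (hφ : ContDiffAt ℝ 2 φ x) (k : Euc n) :
    fderiv ℝ (fun y => ⟪∇ L (∇ u y), ∇ φ y⟫) x k =
      ⟪hessian L (∇ u x) (hessian u x k), ∇ φ x⟫ + ⟪∇ L (∇ u x), hessian φ x k⟫ := by
  have hLu : HasFDerivAt (fun y => ∇ L (∇ u y)) (hessian L (∇ u x) ∘L hessian u x) x :=
    (hasFDerivAt_gradient hL).comp x (hasFDerivAt_gradient hu)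
  rw [fderiv_inner_apply ℝ hLu.differentiableAt (hasFDerivAt_gradient hφ).differentiableAt,
    hLu.fderiv, (hasFDerivAt_gradient hφ).fderiv, add_comm]
  rfl

theorem differentiableAt_inner_gradient_comp_gradient (hL : ContDiffAt ℝ 2 L (∇ u x))
    (hu : ContDiffAt ℝ 2 u x) (hφ : ContDiffAt ℝ 2 φ x) :
    DifferentiableAt ℝ (fun y => ⟪∇ L (∇ u y), ∇ φ y⟫) x :=
  ((hasFDerivAt_gradient hL).comp x (hasFDerivAt_gradient hu)).differentiableAt.inner ℝ
    (hasFDerivAt_gradient hφ).differentiableAt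

theorem differentiableAt_xdu (hu : ContDiffAt ℝ 2 u x) : DifferentiableAt ℝ (xdu u) x :=
  differentiableAt_id.inner ℝ (hasFDerivAt_gradient hu).differentiableAt

theorem gradient_xdu (hu : ContDiffAt ℝ 2 u x) : ∇ (xdu u) x = ∇ u x + hessian u x x :=
  gradient_inner_self_gradient hu

theorem xdu_firstVariation (hL : ContDiffAt ℝ 2 L (∇ u x)) (hf : DifferentiableAt ℝ f (u x))
    (hu : ContDiffAt ℝ 2 u x) (hφ : ContDiffAt ℝ 2 φ x) :
    xdu (firstVariation L f u φ) x =
      radialLinearization L f u φ x + firstVariation L f u (xdu φ) x := by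
  have hu' : DifferentiableAt ℝ u x := hu.differentiableAt two_ne_zero
  have hφ' : DifferentiableAt ℝ φ x := hφ.differentiableAt two_ne_zero
  have hLu := differentiableAt_inner_gradient_comp_gradient hL hu hφ
  have hfu : HasFDerivAt (fun y => f (u y)) (deriv f (u x) • fderiv ℝ u x) x :=
    hf.hasDerivAt.comp_hasFDerivAt x hu'.hasFDerivAt
  have hsplit : xdu (firstVariation L f u φ) x = fderiv ℝ (fun y => ⟪∇ L (∇ u y), ∇ φ y⟫) x x
      - fderiv ℝ (fun y => f (u y) * φ y) x x := by
    rw [xdu_eq_fderiv]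
    exact DFunLike.congr_fun (fderiv_fun_sub hLu (hfu.differentiableAt.mul hφ')) x
  rw [hsplit, fderiv_inner_gradient_comp_gradient hL hu hφ,
    fderiv_fun_mul hfu.differentiableAt hφ', hfu.fderiv, radialLinearization, firstVariation,
    gradient_xdu hφ, xdu_eq_fderiv u, xdu_eq_fderiv φ, inner_sub_left, inner_add_right]
  simp only [add_apply, smul_apply, smul_eq_mul]
  ring

theorem contDiffOn_xdu (hΩ : IsOpen Ω) (hu : ContDiffOn ℝ 2 u Ω) : ContDiffOn ℝ 1 (xdu u) Ω :=
  contDiffOn_id.inner ℝ (contDiffOn_gradient hΩ hu le_rfl)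

theorem contDiffOn_gradient_comp_gradient (hΩ : IsOpen Ω) (hL : ContDiff ℝ 2 L)
    (hu : ContDiffOn ℝ 2 u Ω) : ContDiffOn ℝ 1 (fun x => ∇ L (∇ u x)) Ω :=
  (contDiffOn_gradient isOpen_univ hL.contDiffOn le_rfl).comp
    (contDiffOn_gradient hΩ hu le_rfl) (Set.mapsTo_univ _ _)

theorem continuousOn_hessian_comp_gradient (hΩ : IsOpen Ω) (hL : ContDiff ℝ 2 L)
    (hu : ContDiffOn ℝ 2 u Ω) : ContinuousOn (fun x => hessian L (∇ u x)) Ω :=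
  (continuousOn_hessian isOpen_univ hL.contDiffOn).comp
    (contDiffOn_gradient (m := 1) hΩ hu le_rfl).continuousOn (Set.mapsTo_univ _ _)

theorem integral_radialLinearization_eq_zero_of_isTestFun (hΩ : IsOpen Ω) (hL : ContDiff ℝ 2 L)
    (hf : ContDiff ℝ 1 f) (hu : ContDiffOn ℝ 2 u Ω) (hcrit : IsCriticalPoint Ω L f u)
    (hφ : IsTestFun Ω φ) : ∫ x in Ω, radialLinearization L f u φ x = 0 := by
  have hLu := contDiffOn_gradient_comp_gradient hΩ hL hu
  have hfu : ContDiffOn ℝ 1 (fun x => f (u x)) Ω := hf.comp_contDiffOn (hu.of_le one_le_two)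
  have hφ₂ : ContDiff ℝ 2 φ := contDiff_infty.1 hφ.1 2
  have hint {ψ} (hψ : IsTestFun Ω ψ) : IntegrableOn (firstVariation L f u ψ) Ω :=
    integrableOn_linearForm hLu.continuousOn hfu.continuousOn hψ.isC1TestFun
  have hfirst : IsC1TestFun Ω (firstVariation L f u φ) :=
    isC1TestFun_of_eq_zero hΩ hφ.isC1TestFun
      ((hLu.inner ℝ (contDiffOn_gradient hΩ hφ₂.contDiffOn le_rfl)).sub
        (hfu.mul hφ.isC1TestFun.1.contDiffOn)) fun x hx => by
        rw [firstVariation, gradient_eq_zero_of_notMem_tsupport hx,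
          image_eq_zero_of_notMem_tsupport hx, inner_zero_right, mul_zero, sub_zero]
  have hsum : IntegrableOn
      (fun x => n * firstVariation L f u φ x + firstVariation L f u (xdu φ) x) Ω :=
    ((hint hφ).const_mul _).add (hint (isTestFun_xdu hφ))
  calc ∫ x in Ω, radialLinearization L f u φ x
      = ∫ x in Ω, (xdu (firstVariation L f u φ) x + n * firstVariation L f u φ x
          - (n * firstVariation L f u φ x + firstVariation L f u (xdu φ) x)) := by
        refine setIntegral_congr_fun hΩ.measurableSet fun x hx => ?_
        simp only [xdu_firstVariation hL.contDiffAt (hf.differentiable one_ne_zero _)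
          (hu.contDiffAt (hΩ.mem_nhds hx)) hφ₂.contDiffAt]
        ring
    _ = 0 := by
        rw [integral_sub (integrableOn_xdu_add_mul hfirst _) hsum,
          integral_add ((hint hφ).const_mul _) (hint (isTestFun_xdu hφ)), integral_const_mul,
          hcrit _ hφ, hcrit _ (isTestFun_xdu hφ), setIntegral_xdu_add_mul_eq_zero hΩ hfirst]
        simp

theorem continuousOn_hessian_gradient_hessian_sub_gradient (hΩ : IsOpen Ω) (hL : ContDiff ℝ 2 L)
    (hu : ContDiffOn ℝ 2 u Ω) :
    ContinuousOn (fun x => hessian L (∇ u x) (hessian u x x) - ∇ L (∇ u x)) Ω :=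
  ((continuousOn_hessian_comp_gradient hΩ hL hu).clm_apply
    ((continuousOn_hessian hΩ hu).clm_apply continuousOn_id)).sub
    (contDiffOn_gradient_comp_gradient hΩ hL hu).continuousOn

theorem continuousOn_deriv_comp (hf : ContDiff ℝ 1 f) (hu : ContinuousOn u Ω) :
    ContinuousOn (fun x => deriv f (u x)) Ω :=
  (hf.continuous_deriv le_rfl).comp_continuousOn hu

theorem integrableOn_radialLinearization (hΩ : IsOpen Ω) (hL : ContDiff ℝ 2 L)
    (hf : ContDiff ℝ 1 f) (hu : ContDiffOn ℝ 2 u Ω) (hφ : IsC1TestFun Ω φ) :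
    IntegrableOn (radialLinearization L f u φ) Ω :=
  integrableOn_linearForm (continuousOn_hessian_gradient_hessian_sub_gradient hΩ hL hu)
    ((continuousOn_deriv_comp hf hu.continuousOn).mul (contDiffOn_xdu hΩ hu).continuousOn) hφ

theorem integral_radialLinearization_eq_zero (hΩ : IsOpen Ω) (hL : ContDiff ℝ 2 L)
    (hf : ContDiff ℝ 1 f) (hu : ContDiffOn ℝ 2 u Ω) (hcrit : IsCriticalPoint Ω L f u)
    (hφ : IsC1TestFun Ω φ) : ∫ x in Ω, radialLinearization L f u φ x = 0 :=
  setIntegral_linearForm_eq_zero hΩ (continuousOn_hessian_gradient_hessian_sub_gradient hΩ hL hu)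
    ((continuousOn_deriv_comp hf hu.continuousOn).mul (contDiffOn_xdu hΩ hu).continuousOn)
    (fun _ => integral_radialLinearization_eq_zero_of_isTestFun hΩ hL hf hu hcrit) hφ

end RadialLinearization

section StabilityInequality

theorem inner_clm_smul_add_smul_self {E : Type*} [NormedAddCommGroup E] [InnerProductSpace ℝ E]
    {T : E →L[ℝ] E} (hT : ∀ v w, ⟪T v, w⟫ = ⟪v, T w⟫) (s t : ℝ) (p q : E) :
    ⟪T (s • p + t • q), s • p + t • q⟫ =
      s ^ 2 * ⟪T p, p⟫ + ⟪T q, (2 * s * t) • p + t ^ 2 • q⟫ := by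
  simp only [map_add, map_smul, inner_add_left, inner_add_right, real_inner_smul_left,
    real_inner_smul_right]
  rw [hT p q, real_inner_comm p (T q)]
  ring

variable {n : ℕ} {Ω : Set (Euc n)} {L : Euc n → ℝ} {f : ℝ → ℝ} {u η : Euc n → ℝ} {x : Euc n}

/-- The integrand to which the second variation in the direction `(x·∇u) η` reduces once the
second derivatives of `u` have been integrated away. -/
def reducedSecondVariation (L u η : Euc n → ℝ) (x : Euc n) : ℝ :=
  xdu u x ^ 2 * ⟪hessian L (∇ u x) (∇ η x), ∇ η x⟫
    + 2 * xdu u x * η x * ⟪hessian L (∇ u x) (∇ u x) + ∇ L (∇ u x), ∇ η x⟫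
    + η x ^ 2 * (⟪hessian L (∇ u x) (∇ u x) + ∇ L (∇ u x), ∇ u x⟫ - n * ⟪∇ L (∇ u x), ∇ u x⟫)
    - 2 * η x * ⟪∇ L (∇ u x), ∇ u x⟫ * xdu η x

theorem gradient_mul_sq {v : Euc n → ℝ} (hv : DifferentiableAt ℝ v x)
    (hη : DifferentiableAt ℝ η x) :
    ∇ (fun y => v y * η y ^ 2) x = (2 * v x * η x) • ∇ η x + η x ^ 2 • ∇ v x := by
  have hsq : ∇ (fun y => η y ^ 2) x = (2 * η x) • ∇ η x := by
    simpa only [pow_two, two_mul, add_smul] using gradient_fun_mul hη hη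
  rw [gradient_fun_mul hv (hη.fun_pow 2), hsq]
  module

theorem secondVariation_xdu_mul (hL : ContDiffAt ℝ 2 L (∇ u x)) (hu : ContDiffAt ℝ 2 u x)
    (hη : DifferentiableAt ℝ η x) :
    secondVariation L f u (fun y => xdu u y * η y) x =
      radialLinearization L f u (fun y => xdu u y * η y ^ 2) x
        + xdu u x ^ 2 * ⟪hessian L (∇ u x) (∇ η x), ∇ η x⟫
        + ⟪hessian L (∇ u x) (∇ u x) + ∇ L (∇ u x), ∇ (fun y => xdu u y * η y ^ 2) x⟫ := by
  have hv := differentiableAt_xdu hu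
  have hgrad : hessian u x x = ∇ (xdu u) x - ∇ u x := by rw [gradient_xdu hu]; abel
  rw [secondVariation, radialLinearization, gradient_fun_mul hv hη,
    inner_clm_smul_add_smul_self (inner_hessian_comm hL), gradient_mul_sq hv hη, hgrad, map_sub,
    inner_sub_left, inner_sub_left, inner_add_left]
  ring

theorem xdu_inner_gradient_comp_gradient (hL : ContDiffAt ℝ 2 L (∇ u x))
    (hu : ContDiffAt ℝ 2 u x) :
    xdu (fun y => ⟪∇ L (∇ u y), ∇ u y⟫) x =
      ⟪hessian L (∇ u x) (∇ u x) + ∇ L (∇ u x), hessian u x x⟫ := by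
  simp only [xdu_eq_fderiv]
  rw [fderiv_inner_gradient_comp_gradient hL hu hu, inner_hessian_comm hL,
    real_inner_comm, inner_add_left]

theorem inner_gradient_xdu_mul_sq (hL : ContDiffAt ℝ 2 L (∇ u x)) (hu : ContDiffAt ℝ 2 u x)
    (hη : DifferentiableAt ℝ η x) :
    xdu u x ^ 2 * ⟪hessian L (∇ u x) (∇ η x), ∇ η x⟫
        + ⟪hessian L (∇ u x) (∇ u x) + ∇ L (∇ u x), ∇ (fun y => xdu u y * η y ^ 2) x⟫ =
      reducedSecondVariation L u η x + (xdu (fun y => ⟪∇ L (∇ u y), ∇ u y⟫ * η y ^ 2) x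
        + n * (⟪∇ L (∇ u x), ∇ u x⟫ * η x ^ 2)) := by
  have hv := differentiableAt_xdu hu
  have hG := differentiableAt_inner_gradient_comp_gradient hL hu hu
  have hxduG : xdu (fun y => ⟪∇ L (∇ u y), ∇ u y⟫ * η y ^ 2) x =
      η x ^ 2 * ⟪hessian L (∇ u x) (∇ u x) + ∇ L (∇ u x), hessian u x x⟫
        + 2 * η x * ⟪∇ L (∇ u x), ∇ u x⟫ * xdu η x := by
    rw [← xdu_inner_gradient_comp_gradient hL hu, xdu, gradient_mul_sq hG hη, inner_add_right,
      real_inner_smul_right, real_inner_smul_right, xdu, xdu]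
    ring
  rw [hxduG, gradient_mul_sq hv hη, gradient_xdu hu, reducedSecondVariation, smul_add,
    inner_add_right, inner_add_right, real_inner_smul_right, real_inner_smul_right,
    real_inner_smul_right]
  ring

theorem integral_reducedSecondVariation_nonneg (hΩ : IsOpen Ω) (hL : ContDiff ℝ 2 L)
    (hf : ContDiff ℝ 1 f) (hu : ContDiffOn ℝ 2 u Ω) (hcrit : IsCriticalPoint Ω L f u)
    (hstab : HasNonnegSecondVariation Ω L f u) (hη : IsC1TestFun Ω η) :
    0 ≤ ∫ x in Ω, reducedSecondVariation L u η x := by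
  have hA := continuousOn_hessian_comp_gradient hΩ hL hu
  have hc := continuousOn_deriv_comp hf hu.continuousOn
  have htest {v : Euc n → ℝ} (hv : ContDiffOn ℝ 1 v Ω) {k : ℕ} (hk : k ≠ 0) :
      IsC1TestFun Ω fun x => v x * η x ^ k :=
    isC1TestFun_of_eq_zero hΩ hη (hv.mul (hη.1.contDiffOn.pow k)) fun x hx => by
      rw [image_eq_zero_of_notMem_tsupport hx, zero_pow hk, mul_zero]
  have hξ : IsC1TestFun Ω fun x => xdu u x * η x := by
    simpa using htest (contDiffOn_xdu hΩ hu) one_ne_zero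
  have hφ := htest (contDiffOn_xdu hΩ hu) two_ne_zero
  have hlin_int := integrableOn_radialLinearization hΩ hL hf hu hφ
  have hG := htest ((contDiffOn_gradient_comp_gradient hΩ hL hu).inner ℝ
    (contDiffOn_gradient hΩ hu le_rfl)) two_ne_zero
  have hsecond_int : IntegrableOn (secondVariation L f u fun x => xdu u x * η x) Ω :=
    integrableOn_quadraticForm hA hc hξ
  have hdiff_int : IntegrableOn (fun x => secondVariation L f u (fun y => xdu u y * η y) x
      - radialLinearization L f u (fun y => xdu u y * η y ^ 2) x) Ω := hsecond_int.sub hlin_int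
  calc 0 ≤ ∫ x in Ω, secondVariation L f u (fun y => xdu u y * η y) x :=
        setIntegral_quadraticForm_nonneg hΩ hA hc hstab hξ
    _ = ∫ x in Ω, (secondVariation L f u (fun y => xdu u y * η y) x
          - radialLinearization L f u (fun y => xdu u y * η y ^ 2) x
          - (xdu (fun y => ⟪∇ L (∇ u y), ∇ u y⟫ * η y ^ 2) x
            + n * (⟪∇ L (∇ u x), ∇ u x⟫ * η x ^ 2))) := by
        rw [integral_sub hdiff_int (integrableOn_xdu_add_mul hG _),
          integral_sub hsecond_int hlin_int,
          integral_radialLinearization_eq_zero hΩ hL hf hu hcrit hφ,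
          setIntegral_xdu_add_mul_eq_zero hΩ hG]
        simp
    _ = ∫ x in Ω, reducedSecondVariation L u η x := by
        refine setIntegral_congr_fun hΩ.measurableSet fun x hx => ?_
        have hux := hu.contDiffAt (hΩ.mem_nhds hx)
        have hηx := hη.1.contDiffAt.differentiableAt (x := x) one_ne_zero
        linarith [secondVariation_xdu_mul (f := f) hL.contDiffAt hux hηx,
          inner_gradient_xdu_mul_sq hL.contDiffAt hux hηx]

end StabilityInequality

section AreaDensity

variable {E : Type*} [NormedAddCommGroup E]

/-- The area integrand `p ↦ √(1 + |p|²)`, whose Euler–Lagrange operator is the mean curvature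
operator. -/
def areaDensity (p : E) : ℝ := √(1 + ‖p‖ ^ 2)

theorem areaDensity_pos (p : E) : 0 < areaDensity p := by
  unfold areaDensity
  positivity

theorem areaDensity_sq (p : E) : areaDensity p ^ 2 = 1 + ‖p‖ ^ 2 := sq_sqrt (by positivity)

theorem areaDensity_cube (p : E) : areaDensity p ^ 3 = (1 + ‖p‖ ^ 2) ^ ((3 : ℝ) / 2) := by
  rw [rpow_div_two_eq_sqrt _ (by positivity), areaDensity]
  norm_cast

variable [InnerProductSpace ℝ E]

theorem contDiff_areaDensity {k : WithTop ℕ∞} : ContDiff ℝ k (areaDensity : E → ℝ) :=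
  (contDiff_const.add (contDiff_norm_sq ℝ)).sqrt fun p => by positivity

theorem hasFDerivAt_areaDensity (p : E) :
    HasFDerivAt areaDensity ((areaDensity p)⁻¹ • innerSL ℝ p) p := by
  have h := ((hasStrictFDerivAt_norm_sq p).hasFDerivAt.const_add 1).sqrt (by positivity)
  refine h.congr_fderiv ?_
  rw [← Nat.cast_smul_eq_nsmul ℝ, smul_smul, ← areaDensity]
  congr 1
  push_cast
  field_simp

variable [CompleteSpace E]

theorem gradient_areaDensity (p : E) : ∇ areaDensity p = (areaDensity p)⁻¹ • p :=
  gradient_eq_of_forall_fderiv_apply fun k => by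
    rw [(hasFDerivAt_areaDensity p).fderiv, real_inner_smul_left]
    rfl

theorem hessian_areaDensity_apply (p k : E) :
    hessian areaDensity p k =
      (areaDensity p)⁻¹ • k - ((areaDensity p)⁻¹ ^ 3 * ⟪p, k⟫) • p := by
  have hinv := (hasDerivAt_inv (areaDensity_pos p).ne').comp_hasFDerivAt p
    (hasFDerivAt_areaDensity p)
  rw [hessian, funext gradient_areaDensity]
  refine (DFunLike.congr_fun (hinv.smul (hasFDerivAt_id p)).fderiv k).trans ?_
  simp only [Function.comp_apply, neg_smul, id_eq, add_apply, smul_apply,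
    ContinuousLinearMap.id_apply, ContinuousLinearMap.smulRight_apply, neg_apply,
    coe_innerSL_apply, smul_eq_mul]
  module

theorem inner_gradient_areaDensity (p k : E) :
    ⟪∇ areaDensity p, k⟫ = ⟪p, k⟫ / √(1 + ‖p‖ ^ 2) := by
  rw [gradient_areaDensity, real_inner_smul_left, inv_mul_eq_div, areaDensity]

theorem inner_hessian_areaDensity (p v w : E) :
    ⟪hessian areaDensity p v, w⟫ =
      ⟪v, w⟫ / √(1 + ‖p‖ ^ 2) - ⟪p, v⟫ * ⟪p, w⟫ / (1 + ‖p‖ ^ 2) ^ ((3 : ℝ) / 2) := by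
  rw [hessian_areaDensity_apply, inner_sub_left, real_inner_smul_left, real_inner_smul_left,
    ← areaDensity_cube, ← areaDensity]
  ring

theorem inner_hessian_add_gradient_areaDensity (p k : E) :
    ⟪hessian areaDensity p p + ∇ areaDensity p, k⟫ =
      (2 + ‖p‖ ^ 2) * ⟪p, k⟫ / (1 + ‖p‖ ^ 2) ^ ((3 : ℝ) / 2) := by
  have hpos := areaDensity_pos p
  rw [inner_add_left, inner_gradient_areaDensity, inner_hessian_areaDensity, ← areaDensity_cube,
    ← areaDensity, real_inner_self_eq_norm_sq]
  field_simp
  linear_combination 2 * ⟪p, k⟫ * areaDensity_sq p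

end AreaDensity

section MeanCurvature

variable {n : ℕ} {Ω : Set (Euc n)} {f : ℝ → ℝ} {u η : Euc n → ℝ}

theorem isCriticalPoint_areaDensity (hΩ : IsOpen Ω) (hf : ContDiff ℝ 1 f)
    (hu : ContDiffOn ℝ 2 u Ω) (hsol : IsWeakSolution Ω f u) :
    IsCriticalPoint Ω areaDensity f u := fun φ hφ => by
  have hflux_int : IntegrableOn (fun x => ⟪∇ areaDensity (∇ u x), ∇ φ x⟫) Ω := by
    simpa [-inner_gradient_left, -inner_gradient_right] using integrableOn_linearForm
      (contDiffOn_gradient_comp_gradient hΩ contDiff_areaDensity hu).continuousOn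
      (continuousOn_const (c := (0 : ℝ))) hφ.isC1TestFun
  have hf_int : IntegrableOn (fun x => f (u x) * φ x) Ω := by
    simpa using (integrableOn_linearForm (continuousOn_const (c := (0 : Euc n)))
      (hf.continuous.comp_continuousOn hu.continuousOn) hφ.isC1TestFun).neg
  simp only [firstVariation]
  rw [integral_sub hflux_int hf_int, sub_eq_zero, ← hsol.2.2.2 φ hφ]
  simp only [inner_gradient_areaDensity]

theorem hasNonnegSecondVariation_areaDensity (hΩ : IsOpen Ω) (hf : ContDiff ℝ 1 f)
    (hu : ContDiffOn ℝ 2 u Ω) (hstable : IsStableSolution Ω f u) :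
    HasNonnegSecondVariation Ω areaDensity f u := fun ξ hξ => by
  have hquad_int : IntegrableOn (fun x => ⟪hessian areaDensity (∇ u x) (∇ ξ x), ∇ ξ x⟫) Ω := by
    simpa [-inner_gradient_left, -inner_gradient_right] using integrableOn_quadraticForm
      (continuousOn_hessian_comp_gradient hΩ contDiff_areaDensity hu)
      (continuousOn_const (c := (0 : ℝ))) hξ.isC1TestFun
  have hf_int : IntegrableOn (fun x => deriv f (u x) * ξ x ^ 2) Ω := by
    simpa using (integrableOn_quadraticForm (continuousOn_const (c := (0 : Euc n →L[ℝ] Euc n)))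
      (continuousOn_deriv_comp hf hu.continuousOn) hξ.isC1TestFun).neg
  simp only [secondVariation]
  rw [integral_sub hquad_int hf_int, sub_nonneg]
  refine (hstable.2.2 ξ hξ).trans_eq ?_
  simp only [inner_hessian_areaDensity, real_inner_self_eq_norm_sq, pow_two ⟪_, _⟫]

theorem reducedSecondVariation_areaDensity (u η : Euc n → ℝ) (x : Euc n) :
    reducedSecondVariation areaDensity u η x =
      xdu u x ^ 2 * ‖∇ η x‖ ^ 2 / √(1 + zsq u x)
        + 2 * (2 + zsq u x) * xdu u x * ⟪∇ u x, ∇ η x⟫ * η x / (1 + zsq u x) ^ ((3 : ℝ) / 2)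
        - 2 * zsq u x * η x * ⟪x, ∇ η x⟫ / √(1 + zsq u x)
        - xdu u x ^ 2 * ⟪∇ u x, ∇ η x⟫ ^ 2 / (1 + zsq u x) ^ ((3 : ℝ) / 2)
        - zsq u x * ((n - 1) * zsq u x + (n - 2)) / (1 + zsq u x) ^ ((3 : ℝ) / 2) * η x ^ 2 := by
  have hpos := areaDensity_pos (∇ u x)
  have hzsq : ‖∇ u x‖ ^ 2 = zsq u x := rfl
  have hsqrt : √(1 + zsq u x) = areaDensity (∇ u x) := rfl
  have hcube : (1 + zsq u x) ^ ((3 : ℝ) / 2) = areaDensity (∇ u x) ^ 3 :=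
    (areaDensity_cube _).symm
  have hz : zsq u x = areaDensity (∇ u x) ^ 2 - 1 := by rw [areaDensity_sq, zsq]; ring
  rw [reducedSecondVariation, inner_hessian_areaDensity, inner_hessian_add_gradient_areaDensity,
    inner_hessian_add_gradient_areaDensity, inner_gradient_areaDensity, real_inner_self_eq_norm_sq,
    real_inner_self_eq_norm_sq, hzsq, hsqrt, hcube, hz, ← xdu]
  field_simp
  ring

theorem stmt_10_general (hΩ : IsOpen Ω) (hf : ContDiff ℝ 1 f) (hu : ContDiffOn ℝ 2 u Ω)
    (hstable : IsStableSolution Ω f u) (hη : IsC1TestFun Ω η) :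
    ∫ x in Ω, zsq u x * ((n - 1) * zsq u x + (n - 2)) / (1 + zsq u x) ^ ((3 : ℝ) / 2) * η x ^ 2
      ≤ ∫ x in Ω,
        (xdu u x ^ 2 * ‖∇ η x‖ ^ 2 / √(1 + zsq u x)
          + 2 * (2 + zsq u x) * xdu u x * ⟪∇ u x, ∇ η x⟫ * η x / (1 + zsq u x) ^ ((3 : ℝ) / 2)
          - 2 * zsq u x * η x * ⟪x, ∇ η x⟫ / √(1 + zsq u x)
          - xdu u x ^ 2 * ⟪∇ u x, ∇ η x⟫ ^ 2 / (1 + zsq u x) ^ ((3 : ℝ) / 2)) := by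
  have hP : ContinuousOn (∇ u) Ω := (contDiffOn_gradient (m := 1) hΩ hu le_rfl).continuousOn
  have hQ : ContinuousOn (∇ η) Ω := (continuous_gradient hη.1).continuousOn
  have hη' : ContinuousOn η Ω := hη.1.continuous.continuousOn
  have hnonneg := integral_reducedSecondVariation_nonneg hΩ contDiff_areaDensity hf hu
    (isCriticalPoint_areaDensity hΩ hf hu hstable.1)
    (hasNonnegSecondVariation_areaDensity hΩ hf hu hstable) hη
  simp only [reducedSecondVariation_areaDensity] at hnonneg
  rw [← sub_nonneg, ← integral_sub]
  · exact hnonneg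
  · refine integrableOn_of_continuousOn_of_eq_zero ?_ hη.2.1 hη.2.2 fun x hx => ?_
    · unfold zsq xdu
      fun_prop (disch := intros; positivity)
    · rw [gradient_eq_zero_of_notMem_tsupport hx, image_eq_zero_of_notMem_tsupport hx]; simp
  · refine integrableOn_of_continuousOn_of_eq_zero ?_ hη.2.1 hη.2.2 fun x hx => ?_
    · unfold zsq
      fun_prop (disch := intros; positivity)
    · rw [image_eq_zero_of_notMem_tsupport hx]; simp

end MeanCurvature

/-- **Lemma (Stability inequality tested with `ξ = (x·∇u) η`, second-order terms removed).**
Let `n ≥ 2`, `R > 0`, `f ∈ C¹(ℝ)` and let `u ∈ W^{3,1}_loc(B_{2R})` be a stable solution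
of `div(∇u/√(1+|∇u|²)) = -f(u)` in `B_{2R} ⊂ ℝⁿ`.  Then for every `η ∈ C_c^∞(B_{2R})`:
`∫ z((n-1)z+(n-2))/(1+z)^{3/2} η² ≤ ∫ [ (x·∇u)²|∇η|²/√(1+z) + 2(2+z)(x·∇u)(∇u·∇η)η/(1+z)^{3/2}
  - 2zη(x·∇η)/√(1+z) - (x·∇u)²(∇u·∇η)²/(1+z)^{3/2} ]`. -/
theorem stmt_10 (n : ℕ) (hn : 2 ≤ n) (R : ℝ) (hR : 0 < R)
    (f : ℝ → ℝ) (u : Euc n → ℝ)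
    (hf : ContDiff ℝ 1 f)
    (hreg : ContDiffOn ℝ 3 u (ball (0 : Euc n) (2*R)))
    (hstable : IsStableSolution (ball (0 : Euc n) (2*R)) f u) :
    ∀ η : Euc n → ℝ, IsTestFun (ball (0 : Euc n) (2*R)) η →
      ∫ x in ball (0 : Euc n) (2*R),
          zsq u x * (((n:ℝ) - 1) * zsq u x + ((n:ℝ) - 2))
            / (1 + zsq u x) ^ ((3:ℝ)/2) * η x ^ 2
        ≤ ∫ x in ball (0 : Euc n) (2*R),
            (xdu u x ^ 2 * ‖gradient η x‖ ^ 2 / Real.sqrt (1 + zsq u x)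
              + 2 * (2 + zsq u x) * xdu u x * ⟪gradient u x, gradient η x⟫ * η x
                  / (1 + zsq u x) ^ ((3:ℝ)/2)
              - 2 * zsq u x * η x * ⟪x, gradient η x⟫ / Real.sqrt (1 + zsq u x)
              - xdu u x ^ 2 * ⟪gradient u x, gradient η x⟫ ^ 2
                  / (1 + zsq u x) ^ ((3:ℝ)/2)) := by
  intro η hη
  exact stmt_10_general isOpen_ball hf (hreg.of_le (by norm_num)) hstable hη.isC1TestFun
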